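/- There is a function c : (0,1] → (0, 1/2) such that for every γ ∈ (0,1], every L ≥ 1, and every subset S ⊆ {1,...,L} with |S| ≥ γL, the following holds: if U, V ∈ {0,1}^L are random strings such that U_i = V_i for all i ∈ S, and the bits (U_i)_{i∈S} together with (U_i)_{i∉S} and (V_i)_{i∉S} are mutually independent and uniform on {0,1}, then P(Maj(U) = Maj(V)) ≥ 1/2 + c(γ). -/

import Mathlib

open scoped BigOperators

/-- Weight of a single uniformly random `n`-bit string. -/
noncomputable def unif (n : ℕ) : ℝ := (1 / 2 : ℝ) ^ n

/-- Probability of an event `E` in a finite outcome space with weight `w`. -/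
noncomputable def prob {Ω : Type*} [Fintype Ω] (w : Ω → ℝ) (E : Set Ω) : ℝ :=
  ∑ ω, E.indicator w ω

/-- Majority bit: `true` iff strictly more `1`s (`true`s) than `0`s. -/
def Maj (W : List Bool) : Bool := decide (W.count false < W.count true)

/-!
Encode bits as signs and let `f = ±1` be the majority of a string. Given the shared bits `x`, the
two strings are independent, so the probability of agreement is `1 / 2 + 𝔼 g ^ 2 / 2` where
`g x = 𝔼 y, f (S.piecewise x y)`. Projecting `g` onto the signs of the bits in `S` bounds `𝔼 g ^ 2`
below by the sum over `i ∈ S` of the squared degree-one Fourier coefficients of `f`. By symmetry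
these coefficients are all equal to `𝔼 |X| / L`, with `X` the sum of the `L` signs, and Khintchine's
inequality `L ≤ 3 * (𝔼 |X|) ^ 2`, an interpolation of the second moment of `X` between the first and
the fourth, makes each of their squares at least `1 / (3 * L)`.
-/

open Finset Function

section Expect

variable {α K : Type*} [Field K] [LinearOrder K] [IsStrictOrderedRing K] (s : Finset α)

lemma expect_sq_le_expect_mul_expect_of_sq_le_mul {r f g : α → K} (hf : ∀ i ∈ s, 0 ≤ f i)
    (hg : ∀ i ∈ s, 0 ≤ g i) (hr : ∀ i ∈ s, r i ^ 2 ≤ f i * g i) :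
    (𝔼 i ∈ s, r i) ^ 2 ≤ (𝔼 i ∈ s, f i) * 𝔼 i ∈ s, g i := by
  simp only [expect_eq_sum_div_card, div_pow, div_mul_div_comm, ← sq]
  gcongr
  exact sum_sq_le_sum_mul_sum_of_sq_le_mul s hf hg hr

lemma expect_sq_pow_three_le (f : α → K) :
    (𝔼 i ∈ s, f i ^ 2) ^ 3 ≤ (𝔼 i ∈ s, |f i|) ^ 2 * 𝔼 i ∈ s, f i ^ 4 := by
  have second_le : (𝔼 i ∈ s, f i ^ 2) ^ 2 ≤ (𝔼 i ∈ s, |f i|) * 𝔼 i ∈ s, |f i| ^ 3 :=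
    expect_sq_le_expect_mul_expect_of_sq_le_mul s (fun _ _ ↦ by positivity)
      (fun _ _ ↦ by positivity) fun i _ ↦ by rw [← sq_abs (f i)]; exact le_of_eq (by ring)
  have third_le : (𝔼 i ∈ s, |f i| ^ 3) ^ 2 ≤ (𝔼 i ∈ s, f i ^ 2) * 𝔼 i ∈ s, f i ^ 4 :=
    expect_sq_le_expect_mul_expect_of_sq_le_mul s (fun _ _ ↦ by positivity)
      (fun _ _ ↦ by positivity) fun i _ ↦ by
        rw [← pow_mul, mul_comm, pow_mul, sq_abs]; exact le_of_eq (by ring)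
  have second_nonneg : 0 ≤ 𝔼 i ∈ s, f i ^ 2 := expect_nonneg fun _ _ ↦ by positivity
  rcases second_nonneg.eq_or_lt with second_zero | second_pos
  · rw [← second_zero, zero_pow three_ne_zero]
    exact mul_nonneg (sq_nonneg _) (expect_nonneg fun _ _ ↦ by positivity)
  refine le_of_mul_le_mul_left ?_ second_pos
  calc (𝔼 i ∈ s, f i ^ 2) * (𝔼 i ∈ s, f i ^ 2) ^ 3
      = ((𝔼 i ∈ s, f i ^ 2) ^ 2) ^ 2 := by ring
    _ ≤ ((𝔼 i ∈ s, |f i|) * 𝔼 i ∈ s, |f i| ^ 3) ^ 2 := by gcongr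
    _ = (𝔼 i ∈ s, |f i|) ^ 2 * (𝔼 i ∈ s, |f i| ^ 3) ^ 2 := mul_pow ..
    _ ≤ (𝔼 i ∈ s, |f i|) ^ 2 * ((𝔼 i ∈ s, f i ^ 2) * 𝔼 i ∈ s, f i ^ 4) := by gcongr
    _ = (𝔼 i ∈ s, f i ^ 2) * ((𝔼 i ∈ s, |f i|) ^ 2 * 𝔼 i ∈ s, f i ^ 4) := by ring

end Expect

lemma unif_mul_unif_mul_unif (n : ℕ) :
    unif n * unif n * unif n =
      (Fintype.card ((Fin n → Bool) × (Fin n → Bool) × (Fin n → Bool)) : ℝ)⁻¹ := by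
  simp [unif, mul_assoc]

lemma prob_const_eq_expect {Ω : Type*} [Fintype Ω] (E : Set Ω) :
    prob (fun _ ↦ (Fintype.card Ω : ℝ)⁻¹) E = 𝔼 ω, E.indicator 1 ω := by
  classical
  simp only [prob, Fintype.expect_eq_sum_div_card, sum_div, Set.indicator_apply, Pi.one_apply,
    ite_div, one_div, zero_div]

/-- The `±1` encoding of a bit, turning a uniform bit into a Rademacher variable. -/
def boolSign (b : Bool) : ℝ := if b then 1 else -1

@[simp] lemma boolSign_true : boolSign true = 1 := rfl

@[simp] lemma boolSign_false : boolSign false = -1 := rfl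

lemma boolSign_not (b : Bool) : boolSign (!b) = -boolSign b := by cases b <;> simp

lemma boolSign_sq (b : Bool) : boolSign b ^ 2 = 1 := by cases b <;> simp

lemma boole_eq_one_add_boolSign_mul_div_two (b c : Bool) :
    (if b = c then (1 : ℝ) else 0) = (1 + boolSign b * boolSign c) / 2 := by
  cases b <;> cases c <;> simp

lemma count_true_sub_count_false (l : List Bool) :
    (l.count true : ℝ) - l.count false = (l.map boolSign).sum := by
  induction l with
  | nil => simp
  | cons b l ih =>
    rw [List.map_cons, List.sum_cons, ← ih]
    cases b <;> simp <;> ring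

/-- The majority bit of a family of bits indexed by any finite type; ties give `false`, as they do
for `Maj`. -/
noncomputable def majority {ι : Type*} [Fintype ι] (x : ι → Bool) : Bool :=
  decide (0 < ∑ i, boolSign (x i))

lemma maj_ofFn {n : ℕ} (x : Fin n → Bool) : Maj (List.ofFn x) = majority x := by
  have count_sub : ((List.ofFn x).count true : ℝ) - (List.ofFn x).count false =
      ∑ i, boolSign (x i) := by
    rw [count_true_sub_count_false, List.map_ofFn, List.sum_ofFn]
    rfl
  rw [Maj, majority, decide_eq_decide, ← count_sub, sub_pos, Nat.cast_lt]

lemma majority_comp_perm {ι : Type*} [Fintype ι] (σ : Equiv.Perm ι) (x : ι → Bool) :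
    majority (x ∘ σ) = majority x :=
  congrArg (fun t : ℝ ↦ decide (0 < t)) (Equiv.sum_comp σ fun i ↦ boolSign (x i))

lemma boolSign_majority_mul_sum {ι : Type*} [Fintype ι] (x : ι → Bool) :
    boolSign (majority x) * ∑ i, boolSign (x i) = |∑ i, boolSign (x i)| := by
  rcases lt_or_ge 0 (∑ i, boolSign (x i)) with sum_pos | sum_nonpos
  · rw [majority, decide_eq_true sum_pos, boolSign_true, one_mul, abs_of_pos sum_pos]
  · rw [majority, decide_eq_false sum_nonpos.not_gt, boolSign_false, neg_one_mul,
      abs_of_nonpos sum_nonpos]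

section Cube

variable {ι : Type*} [DecidableEq ι]

lemma sum_mul_boolSign_update {S : Finset ι} {i : ι} (hi : i ∉ S) (a : ι → ℝ) (x : ι → Bool)
    (b : Bool) : ∑ j ∈ S, a j * boolSign (update x i b j) = ∑ j ∈ S, a j * boolSign (x j) :=
  sum_congr rfl fun j hj ↦ by rw [update_of_ne (ne_of_mem_of_not_mem hj hi)]

variable [Fintype ι]

lemma expect_boolSign_mul_eq_zero {i : ι} {g : (ι → Bool) → ℝ}
    (hg : ∀ x, g (update x i (!x i)) = g x) : 𝔼 x, boolSign (x i) * g x = 0 := by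
  have flip_involutive : Involutive fun x : ι → Bool ↦ update x i (!x i) := fun x ↦ by simp
  have flip_neg : 𝔼 x, boolSign (x i) * g x = 𝔼 x, -(boolSign (x i) * g x) :=
    Fintype.expect_equiv (flip_involutive.toPerm _) _ _ fun x ↦ by
      simp [hg, boolSign_not]
  rw [expect_neg_distrib] at flip_neg
  linarith

lemma expect_boolSign_mul_sum_pow_eq_zero {S : Finset ι} {i : ι} (hi : i ∉ S) (a : ι → ℝ) (k : ℕ) :
    𝔼 x : ι → Bool, boolSign (x i) * (∑ j ∈ S, a j * boolSign (x j)) ^ k = 0 :=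
  expect_boolSign_mul_eq_zero fun x ↦ by rw [sum_mul_boolSign_update hi]

lemma expect_sum_mul_boolSign_sq (S : Finset ι) (a : ι → ℝ) :
    𝔼 x : ι → Bool, (∑ i ∈ S, a i * boolSign (x i)) ^ 2 = ∑ i ∈ S, a i ^ 2 := by
  induction S using Finset.induction_on with
  | empty => simp
  | insert i S hi ih =>
    have expand (x : ι → Bool) : (∑ j ∈ insert i S, a j * boolSign (x j)) ^ 2 =
        a i ^ 2 + 2 * a i * (boolSign (x i) * (∑ j ∈ S, a j * boolSign (x j)) ^ 1) +
          (∑ j ∈ S, a j * boolSign (x j)) ^ 2 := by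
      rw [sum_insert hi]
      linear_combination a i ^ 2 * boolSign_sq (x i)
    simp_rw [expand]
    simp only [expect_add_distrib, ← mul_expect, ih,
      expect_boolSign_mul_sum_pow_eq_zero hi, Fintype.expect_const, sum_insert hi]
    ring

lemma expect_sum_mul_boolSign_pow_four_le (S : Finset ι) (a : ι → ℝ) :
    𝔼 x : ι → Bool, (∑ i ∈ S, a i * boolSign (x i)) ^ 4 ≤ 3 * (∑ i ∈ S, a i ^ 2) ^ 2 := by
  induction S using Finset.induction_on with
  | empty => simp
  | insert i S hi ih =>
    have expand (x : ι → Bool) : (∑ j ∈ insert i S, a j * boolSign (x j)) ^ 4 =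
        a i ^ 4 + 4 * a i ^ 3 * (boolSign (x i) * (∑ j ∈ S, a j * boolSign (x j)) ^ 1) +
          6 * a i ^ 2 * (∑ j ∈ S, a j * boolSign (x j)) ^ 2 +
          4 * a i * (boolSign (x i) * (∑ j ∈ S, a j * boolSign (x j)) ^ 3) +
          (∑ j ∈ S, a j * boolSign (x j)) ^ 4 := by
      rw [sum_insert hi]
      generalize ∑ j ∈ S, a j * boolSign (x j) = t
      linear_combination (a i ^ 4 * (boolSign (x i) ^ 2 + 1) + 4 * a i ^ 3 * boolSign (x i) * t +
        6 * a i ^ 2 * t ^ 2) * boolSign_sq (x i)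
    simp_rw [expand]
    simp only [expect_add_distrib, ← mul_expect, expect_sum_mul_boolSign_sq,
      expect_boolSign_mul_sum_pow_eq_zero hi, Fintype.expect_const, sum_insert hi]
    linarith [pow_nonneg (sq_nonneg (a i)) 2]

theorem sum_sq_le_three_mul_expect_abs_sq (S : Finset ι) (a : ι → ℝ) :
    ∑ i ∈ S, a i ^ 2 ≤ 3 * (𝔼 x : ι → Bool, |∑ i ∈ S, a i * boolSign (x i)|) ^ 2 := by
  have interpolation :=
    expect_sq_pow_three_le univ fun x : ι → Bool ↦ ∑ i ∈ S, a i * boolSign (x i)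
  rw [expect_sum_mul_boolSign_sq] at interpolation
  have fourth_le := expect_sum_mul_boolSign_pow_four_le S a
  generalize 𝔼 x : ι → Bool, |∑ i ∈ S, a i * boolSign (x i)| = m at *
  have norm_nonneg : 0 ≤ ∑ i ∈ S, a i ^ 2 := sum_nonneg fun _ _ ↦ sq_nonneg _
  rcases norm_nonneg.eq_or_lt with norm_zero | norm_pos
  · rw [← norm_zero]
    positivity
  refine le_of_mul_le_mul_right ?_ (pow_pos norm_pos 2)
  calc (∑ i ∈ S, a i ^ 2) * (∑ i ∈ S, a i ^ 2) ^ 2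
      = (∑ i ∈ S, a i ^ 2) ^ 3 := by ring
    _ ≤ m ^ 2 * (3 * (∑ i ∈ S, a i ^ 2) ^ 2) := interpolation.trans (by gcongr)
    _ = 3 * m ^ 2 * (∑ i ∈ S, a i ^ 2) ^ 2 := by ring

/-- The degree-one Fourier coefficient of `f` at the coordinate `i`, with respect to the uniform
measure on the cube. -/
noncomputable def degreeOneCoeff (f : (ι → Bool) → ℝ) (i : ι) : ℝ := 𝔼 x, f x * boolSign (x i)

/-- The expectation of `f u * f v` for uniform strings `u` and `v` that share their bits in `S` and
are otherwise independent, written as the second moment of the conditional expectation of `f`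
given those bits. The bits of `x` outside `S` and of `y` inside `S` are dummies. -/
noncomputable def sharedStability (S : Finset ι) (f : (ι → Bool) → ℝ) : ℝ :=
  𝔼 x, (𝔼 y, f (S.piecewise x y)) ^ 2

lemma expect_expect_piecewise {β : Type*} [Fintype β] [Nonempty β] (S : Finset ι)
    (f : (ι → β) → ℝ) :
    𝔼 x, 𝔼 y, f (S.piecewise x y) = 𝔼 u, f u := by
  have exchange_involutive : Involutive fun p : (ι → β) × (ι → β) ↦
      (S.piecewise p.1 p.2, S.piecewise p.2 p.1) := fun p ↦ by simp [piecewise_same]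
  calc 𝔼 x, 𝔼 y, f (S.piecewise x y)
      = 𝔼 p : (ι → β) × (ι → β), f (S.piecewise p.1 p.2) := (expect_product' ..).symm
    _ = 𝔼 p : (ι → β) × (ι → β), f p.1 :=
        Fintype.expect_equiv (exchange_involutive.toPerm _) _ _ fun _ ↦ rfl
    _ = 𝔼 u, 𝔼 _v : ι → β, f u := expect_product' _ _ fun u _ ↦ f u
    _ = 𝔼 u, f u := by simp only [Fintype.expect_const]

lemma expect_expect_piecewise_mul_sum (S : Finset ι) (f : (ι → Bool) → ℝ) (a : ι → ℝ) :
    𝔼 x, (𝔼 y, f (S.piecewise x y)) * ∑ i ∈ S, a i * boolSign (x i) =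
      ∑ i ∈ S, a i * degreeOneCoeff f i := by
  have sum_piecewise (x y : ι → Bool) :
      ∑ i ∈ S, a i * boolSign (S.piecewise x y i) = ∑ i ∈ S, a i * boolSign (x i) :=
    sum_congr rfl fun i hi ↦ by rw [piecewise_eq_of_mem _ _ _ hi]
  calc 𝔼 x, (𝔼 y, f (S.piecewise x y)) * ∑ i ∈ S, a i * boolSign (x i)
      = 𝔼 x, 𝔼 y, f (S.piecewise x y) * ∑ i ∈ S, a i * boolSign (S.piecewise x y i) := by
        simp only [expect_mul, sum_piecewise]
    _ = 𝔼 u, f u * ∑ i ∈ S, a i * boolSign (u i) :=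
        expect_expect_piecewise S fun u ↦ f u * ∑ i ∈ S, a i * boolSign (u i)
    _ = ∑ i ∈ S, a i * degreeOneCoeff f i := by
        simp only [mul_sum, expect_sum_comm, degreeOneCoeff, mul_expect, mul_left_comm]

-- Bessel's inequality: the left side is the second moment of the projection of
-- `fun x ↦ 𝔼 y, f (S.piecewise x y)` onto the span of the signs of the bits in `S`.
theorem sum_degreeOneCoeff_sq_le_sharedStability (S : Finset ι) (f : (ι → Bool) → ℝ) :
    ∑ i ∈ S, degreeOneCoeff f i ^ 2 ≤ sharedStability S f := by
  have residual_nonneg : 0 ≤ 𝔼 x : ι → Bool,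
      ((𝔼 y, f (S.piecewise x y)) - ∑ i ∈ S, degreeOneCoeff f i * boolSign (x i)) ^ 2 :=
    expect_nonneg fun _ _ ↦ sq_nonneg _
  simp only [sub_sq, expect_add_distrib, expect_sub_distrib, mul_assoc, ← mul_expect,
    expect_expect_piecewise_mul_sum, expect_sum_mul_boolSign_sq, ← sq] at residual_nonneg
  rw [sharedStability]
  linarith

lemma degreeOneCoeff_eq_of_comp_perm {f : (ι → Bool) → ℝ}
    (hf : ∀ (σ : Equiv.Perm ι) (x : ι → Bool), f (x ∘ σ) = f x) (i j : ι) :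
    degreeOneCoeff f i = degreeOneCoeff f j :=
  Fintype.expect_equiv ((Equiv.swap i j).arrowCongr (Equiv.refl Bool)) _ _ fun x ↦ by
    have arrowCongr_swap : (Equiv.swap i j).arrowCongr (Equiv.refl Bool) x =
      x ∘ Equiv.swap i j := rfl
    rw [arrowCongr_swap, hf, comp_apply, Equiv.swap_apply_right]

lemma card_mul_degreeOneCoeff_majority (i : ι) :
    Fintype.card ι * degreeOneCoeff (fun x ↦ boolSign (majority x)) i =
      𝔼 x : ι → Bool, |∑ j, boolSign (x j)| := by
  calc (Fintype.card ι : ℝ) * degreeOneCoeff (fun x ↦ boolSign (majority x)) i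
      = ∑ _j : ι, degreeOneCoeff (fun x ↦ boolSign (majority x)) i := by
        rw [sum_const, nsmul_eq_mul, card_univ]
    _ = ∑ j, degreeOneCoeff (fun x ↦ boolSign (majority x)) j :=
        sum_congr rfl fun j _ ↦
          degreeOneCoeff_eq_of_comp_perm (fun σ x ↦ by rw [majority_comp_perm]) i j
    _ = 𝔼 x : ι → Bool, |∑ j, boolSign (x j)| := by
        simp only [degreeOneCoeff, ← expect_sum_comm, ← mul_sum, boolSign_majority_mul_sum]

lemma one_le_three_mul_card_mul_degreeOneCoeff_majority_sq (i : ι) :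
    1 ≤ 3 * Fintype.card ι * degreeOneCoeff (fun x ↦ boolSign (majority x)) i ^ 2 := by
  have card_pos : (0 : ℝ) < Fintype.card ι := by exact_mod_cast Fintype.card_pos_iff.mpr ⟨i⟩
  have khintchine := sum_sq_le_three_mul_expect_abs_sq (univ : Finset ι) 1
  simp only [Pi.one_apply, one_pow, one_mul, sum_const, nsmul_eq_mul, mul_one, card_univ,
    ← card_mul_degreeOneCoeff_majority i] at khintchine
  refine le_of_mul_le_mul_left ?_ card_pos
  linarith

theorem card_le_three_mul_card_mul_sharedStability_majority (S : Finset ι) :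
    #S ≤ 3 * Fintype.card ι * sharedStability S fun x ↦ boolSign (majority x) := by
  calc (#S : ℝ)
      = ∑ _i ∈ S, 1 := by rw [sum_const, nsmul_eq_mul, mul_one]
    _ ≤ ∑ i ∈ S, 3 * Fintype.card ι * degreeOneCoeff (fun x ↦ boolSign (majority x)) i ^ 2 :=
        sum_le_sum fun i _ ↦ one_le_three_mul_card_mul_degreeOneCoeff_majority_sq i
    _ = 3 * Fintype.card ι * ∑ i ∈ S, degreeOneCoeff (fun x ↦ boolSign (majority x)) i ^ 2 :=
        (mul_sum ..).symm
    _ ≤ 3 * Fintype.card ι * sharedStability S fun x ↦ boolSign (majority x) := by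
        gcongr
        exact sum_degreeOneCoeff_sq_le_sharedStability S _

lemma expect_mul_piecewise_eq_sharedStability (S : Finset ι) (f : (ι → Bool) → ℝ) :
    𝔼 ω : (ι → Bool) × (ι → Bool) × (ι → Bool),
      f (S.piecewise ω.1 ω.2.1) * f (S.piecewise ω.1 ω.2.2) = sharedStability S f := by
  simp only [sharedStability, sq, expect_mul_expect, ← univ_product_univ, expect_product]

lemma prob_eq_half_add_sharedStability (S : Finset ι) (M : (ι → Bool) → Bool) :
    prob (fun _ ↦ (Fintype.card ((ι → Bool) × (ι → Bool) × (ι → Bool)) : ℝ)⁻¹)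
        {ω : (ι → Bool) × (ι → Bool) × (ι → Bool) |
          M (S.piecewise ω.1 ω.2.1) = M (S.piecewise ω.1 ω.2.2)} =
      1 / 2 + sharedStability S (fun x ↦ boolSign (M x)) / 2 := by
  rw [prob_const_eq_expect]
  simp only [Set.indicator_apply, Set.mem_ofPred_eq, Pi.one_apply,
    boole_eq_one_add_boolSign_mul_div_two]
  rw [← expect_div, expect_add_distrib, Fintype.expect_const,
    expect_mul_piecewise_eq_sharedStability S fun x ↦ boolSign (M x), add_div]

end Cube

/-- **Correlation of majorities of strings with shared bits.**  There is a function
`c : (0,1] → (0, 1/2)` such that for every `γ ∈ (0,1]`, every `L ≥ 1` and every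
`S ⊆ {1,…,L}` with `|S| ≥ γL`: if `U, V ∈ {0,1}^L` are random strings with `U_i = V_i`
for `i ∈ S`, and the bits `(U_i)_{i∈S}`, `(U_i)_{i∉S}`, `(V_i)_{i∉S}` are mutually
independent and uniform, then `P(Maj(U) = Maj(V)) ≥ 1/2 + c(γ)`.  (The shared bits are
modelled by `ω.1`, the private bits of `U` by `ω.2.1` and those of `V` by `ω.2.2`.) -/
theorem shared_bits_majority_correlation :
    ∃ c : ℝ → ℝ, (∀ γ : ℝ, γ ∈ Set.Ioc (0 : ℝ) 1 → c γ ∈ Set.Ioo (0 : ℝ) (1 / 2)) ∧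
      ∀ γ : ℝ, γ ∈ Set.Ioc (0 : ℝ) 1 → ∀ L : ℕ, 1 ≤ L → ∀ S : Finset (Fin L),
        γ * L ≤ S.card →
        prob (fun _ : (Fin L → Bool) × (Fin L → Bool) × (Fin L → Bool) =>
            unif L * unif L * unif L)
          {ω | Maj (List.ofFn fun i => if i ∈ S then ω.1 i else ω.2.1 i)
             = Maj (List.ofFn fun i => if i ∈ S then ω.1 i else ω.2.2 i)}
        ≥ 1 / 2 + c γ := by
  refine ⟨fun γ ↦ γ / 6, fun γ hγ ↦ ⟨by linarith [hγ.1], by linarith [hγ.2]⟩, ?_⟩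
  intro γ _ L hL S hS
  have L_pos : (0 : ℝ) < L := by exact_mod_cast hL
  have stability_ge : γ ≤ 3 * sharedStability S fun x ↦ boolSign (majority x) := by
    have card_le := card_le_three_mul_card_mul_sharedStability_majority S
    rw [Fintype.card_fin] at card_le
    refine le_of_mul_le_mul_right ?_ L_pos
    linarith
  have agreement := prob_eq_half_add_sharedStability S majority
  unfold Finset.piecewise at agreement
  simp only [unif_mul_unif_mul_unif, maj_ofFn, agreement]
  linarith
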